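/- Let F : S → G(S) be a Markov chain on a measurable space S and let p : S → {1,…,d} be a measurable priority function. If there exists a progress-measure supermartingale for (F, p), then ℙ_{x₀}[Parity(p)] = 1 for every initial state x₀ ∈ S. -/

import Mathlib

open MeasureTheory ProbabilityTheory Set
open scoped ENNReal NNReal

variable {S : Type*} [MeasurableSpace S]

/-- Prepend an initial state to a trace. -/
def prep (s₀ : S) (ω : ℕ → S) : ℕ → S := fun n => Nat.rec s₀ (fun k _ => ω k) n

/-- The parity condition for a priority function `p`: the minimum priority
occurring infinitely often is even. -/
def parityEvent (p : S → ℕ) : Set (ℕ → S) :=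
  {ω | Even (sInf {q : ℕ | {i : ℕ | p (ω i) = q}.Infinite})}

/-- The truncated strict lexicographic supermartingale ordering on `[0,∞]^d`,
comparing only the first `k` components: `r ≻_k r'` iff there is a level `l < k`
with `r i ≥ r' i` for all `i < l` and `r l ≥ 1 + r' l`. -/
def lexGTTrunc {d : ℕ} (k : ℕ) (r r' : Fin d → ℝ≥0∞) : Prop :=
  ∃ l : Fin d, (l : ℕ) < k ∧ (∀ i < l, r' i ≤ r i) ∧ r' l + 1 ≤ r l

/-- The truncated non-strict lexicographic supermartingale ordering on `[0,∞]^d`: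
the union of `≻_k` with the componentwise order on the first `k` components. -/
def lexGETrunc {d : ℕ} (k : ℕ) (r r' : Fin d → ℝ≥0∞) : Prop :=
  lexGTTrunc k r r' ∨ ∀ i : Fin d, (i : ℕ) < k → r' i ≤ r i

/-- The next-time operator applied componentwise: `(𝕏 r)(s) = ∫ r dF(s)`. -/
noncomputable def nextTimeV (F : Kernel S S) {m : ℕ} (r : S → Fin m → ℝ≥0∞) :
    S → Fin m → ℝ≥0∞ :=
  fun s i => ∫⁻ y, r y i ∂(F s)

/-- A progress-measure supermartingale (PMSM) for `(F, p)` with priorities in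
`{1,…,d}`: a measurable `[0,∞)^d`-valued function `r` with
`r(x) ⪰_{p(x)} (𝕏 r)(x)` when `p(x)` is even and `r(x) ≻_{p(x)} (𝕏 r)(x)` when
`p(x)` is odd. -/
def IsPMSM (F : Kernel S S) {d : ℕ} (p : S → ℕ) (r : S → Fin d → ℝ≥0∞) : Prop :=
  (∀ i, Measurable fun x => r x i) ∧ (∀ x i, r x i ≠ ⊤) ∧
    (∀ x, Even (p x) → lexGETrunc (p x) (r x) (nextTimeV F r x)) ∧
    (∀ x, ¬ Even (p x) → lexGTTrunc (p x) (r x) (nextTimeV F r x))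

/-!
A finite nonnegative function `f` that does not increase in expectation while the chain is in `G`,
and drops by at least `1` on each visit to `D`, bounds the expected number of visits to `D` made
before leaving `G`. By the Markov property the same holds after every fixed time, so almost every
trace that is eventually in `G` visits `D` only finitely often.

For an odd `q`, consider the traces whose priorities are eventually at least `q`. Going up through
the levels `l < q`, once the levels below `l` have stopped decreasing strictly, the `l`-th component
of the progress measure is such an `f` for the set of strict decreases at level `l`. So all these
levels eventually stop decreasing strictly, whereas every visit to priority `q` forces one of them
to do so. Hence `q` is not the least priority seen infinitely often.
-/

open Filter

theorem eventually_sInf_infinite_fiber_le (a : ℕ → ℕ) :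
    ∀ᶠ n in atTop, sInf {q | {i | a i = q}.Infinite} ≤ a n := by
  have hbelow : ∀ᶠ n in atTop, ∀ q ∈ Iio (sInf {q | {i | a i = q}.Infinite}), a n ≠ q := by
    refine (eventually_all_finite (finite_Iio _)).2 fun q hq => ?_
    rw [← not_frequently, Nat.frequently_atTop_iff_infinite]
    exact Nat.notMem_of_lt_sInf hq
  filter_upwards [hbelow] with n hn
  exact not_lt.1 fun hlt => hn _ hlt rfl

theorem frequently_eq_sInf_infinite_fiber {a : ℕ → ℕ} (ha : BddAbove (range a)) :
    ∃ᶠ n in atTop, a n = sInf {q | {i | a i = q}.Infinite} := by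
  obtain ⟨q, -, hq⟩ : ∃ q ∈ range a, ∃ᶠ n in atTop, a n = q :=
    (frequently_exists_finite ha.finite).1 (Frequently.of_forall fun n => ⟨a n, ⟨n, rfl⟩, rfl⟩)
  have hne : {q | {i | a i = q}.Infinite}.Nonempty :=
    ⟨q, Nat.frequently_atTop_iff_infinite.1 hq⟩
  exact Nat.frequently_atTop_iff_infinite.2 (Nat.sInf_mem hne)

section Visits

variable {α : Type*}

/-- The number of visits of a trace to `D` before time `n` and before its first exit from `G`. -/
noncomputable def visitsBeforeExit (G D : Set α) : ℕ → (ℕ → α) → ℝ≥0∞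
  | 0, _ => 0
  | n + 1, ω =>
    G.indicator 1 (ω 0) * (D.indicator 1 (ω 0) + visitsBeforeExit G D n fun k => ω (k + 1))

theorem monotone_visitsBeforeExit (G D : Set α) : Monotone (visitsBeforeExit G D) := by
  refine monotone_nat_of_le_succ fun n => ?_
  induction n with
  | zero => exact fun ω => zero_le
  | succ n ih =>
    intro ω
    simp only [visitsBeforeExit]
    gcongr
    exact ih _

theorem visitsBeforeExit_eq_sum_of_forall_mem {G : Set α} (D : Set α) (n : ℕ) {ω : ℕ → α}
    (hG : ∀ k, ω k ∈ G) :
    visitsBeforeExit G D n ω = ∑ k ∈ Finset.range n, D.indicator 1 (ω k) := by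
  induction n generalizing ω with
  | zero => rfl
  | succ n ih =>
    rw [visitsBeforeExit, ih fun k => hG (k + 1), Finset.sum_range_succ', add_comm,
      indicator_of_mem (hG 0), Pi.one_apply, one_mul]

theorem iSup_visitsBeforeExit_eq_top {G D : Set α} {ω : ℕ → α} (hG : ∀ k, ω k ∈ G)
    (hD : ∃ᶠ k in atTop, ω k ∈ D) : ⨆ n, visitsBeforeExit G D n ω = ⊤ := by
  have : Infinite {k | ω k ∈ D} := (Nat.frequently_atTop_iff_infinite.1 hD).to_subtype
  calc ⨆ n, visitsBeforeExit G D n ω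
      = ∑' k, D.indicator 1 (ω k) := by
        simp only [visitsBeforeExit_eq_sum_of_forall_mem D _ hG, ENNReal.tsum_eq_iSup_nat]
    _ = ∑' _ : {k | ω k ∈ D}, 1 := (tsum_subtype {k | ω k ∈ D} 1).symm
    _ = ⊤ := ENNReal.tsum_const_eq_top_of_ne_zero one_ne_zero

theorem eventually_notMem_of_iSup_visitsBeforeExit_lt_top {G D : Set α} {ω : ℕ → α}
    (hfin : ∀ m, ⨆ n, visitsBeforeExit G D n (fun k => ω (k + m)) < ⊤)
    (hG : ∀ᶠ n in atTop, ω n ∈ G) : ∀ᶠ n in atTop, ω n ∉ D := by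
  obtain ⟨m, hm⟩ := eventually_atTop.1 hG
  rw [← map_add_atTop_eq_nat m, eventually_map, ← not_frequently]
  exact fun hD =>
    (hfin m).ne (iSup_visitsBeforeExit_eq_top (fun k => hm _ (Nat.le_add_left m k)) hD)

end Visits

theorem measurable_visitsBeforeExit {G D : Set S} (hG : MeasurableSet G) (hD : MeasurableSet D)
    (n : ℕ) : Measurable (visitsBeforeExit G D n) := by
  induction n with
  | zero => exact measurable_const
  | succ n ih =>
    have hhead : Measurable fun ω : ℕ → S => ω 0 := measurable_pi_apply 0
    have htail : Measurable fun (ω : ℕ → S) k => ω (k + 1) := by fun_prop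
    exact ((measurable_one.indicator hG).comp hhead).mul
      (((measurable_one.indicator hD).comp hhead).add (ih.comp htail))

theorem measurable_prep_uncurry : Measurable fun z : S × (ℕ → S) => prep z.1 z.2 := by
  refine measurable_pi_iff.2 fun n => ?_
  cases n with
  | zero => exact measurable_fst
  | succ k => exact (measurable_pi_apply k).comp measurable_snd

theorem measurable_prep (s : S) : Measurable (prep s) :=
  measurable_prep_uncurry.comp measurable_prodMk_left

theorem measurable_map_prep (P : Kernel S (ℕ → S)) [IsSFiniteKernel P] :
    Measurable fun s => (P s).map (prep s) := by
  refine Measure.measurable_of_measurable_coe _ fun A hA => ?_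
  simp only [Measure.map_apply (measurable_prep _) hA]
  exact Kernel.measurable_kernel_prodMk_left (measurable_prep_uncurry hA)

/-- `P` is the trace kernel of the Markov chain `F`: `P s` is the law of the trace `s₁ s₂ ⋯` that
follows the initial state `s`. The initial state is not part of the trace, so `(P s).map (prep s)`
is the law of the trace started at `s`. -/
def IsTraceKernel (F : Kernel S S) (P : Kernel S (ℕ → S)) : Prop :=
  ∀ s, P s = (F s).bind fun t => (P t).map (prep t)

namespace IsTraceKernel

variable {F : Kernel S S} {P : Kernel S (ℕ → S)}

theorem lintegral_eq [IsSFiniteKernel P] (hP : IsTraceKernel F P) (s : S)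
    {f : (ℕ → S) → ℝ≥0∞} (hf : Measurable f) :
    ∫⁻ ω, f ω ∂P s = ∫⁻ t, ∫⁻ ω, f (prep t ω) ∂P t ∂F s := by
  rw [hP s, Measure.lintegral_bind (measurable_map_prep P).aemeasurable hf.aemeasurable]
  exact lintegral_congr fun t => lintegral_map hf (measurable_prep t)

theorem ae_of_forall_ae_prep [IsSFiniteKernel P] (hP : IsTraceKernel F P)
    {A : Set (ℕ → S)} (hA : MeasurableSet A) (h : ∀ s, ∀ᵐ ω ∂P s, prep s ω ∈ A) (s : S) :
    ∀ᵐ ω ∂P s, ω ∈ A := by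
  have hnull : ∀ t, (P t).map (prep t) Aᶜ = 0 := fun t =>
    (Measure.map_apply (measurable_prep t) hA.compl).trans (h t)
  change P s Aᶜ = 0
  simp only [hP s, Measure.bind_apply hA.compl (measurable_map_prep P).aemeasurable, hnull,
    lintegral_zero]

theorem ae_forall_shift_mem [IsSFiniteKernel P] (hP : IsTraceKernel F P)
    {A : Set (ℕ → S)} (hA : MeasurableSet A) (h : ∀ s, ∀ᵐ ω ∂P s, prep s ω ∈ A) (s : S) :
    ∀ᵐ ω ∂P s, ∀ m, (fun k => ω (k + m)) ∈ A := by
  refine ae_all_iff.2 fun m => ?_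
  induction m generalizing s with
  | zero => exact hP.ae_of_forall_ae_prep hA h s
  | succ m ih =>
    have hshift : Measurable fun (ω : ℕ → S) k => ω (k + (m + 1)) := by fun_prop
    exact hP.ae_of_forall_ae_prep (hshift hA) ih s

theorem lintegral_visitsBeforeExit_le [IsMarkovKernel P] (hP : IsTraceKernel F P)
    {G D : Set S} (hG : MeasurableSet G) (hD : MeasurableSet D) {f : S → ℝ≥0∞}
    (hf : ∀ x ∈ G, ∫⁻ y, f y ∂F x + D.indicator 1 x ≤ f x) (n : ℕ) (x : S) :
    ∫⁻ ω, visitsBeforeExit G D n (prep x ω) ∂P x ≤ f x := by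
  induction n generalizing x with
  | zero => simp [visitsBeforeExit]
  | succ n ih =>
    change ∫⁻ ω, G.indicator 1 x * (D.indicator 1 x + visitsBeforeExit G D n ω) ∂P x ≤ f x
    by_cases hx : x ∈ G
    · calc ∫⁻ ω, G.indicator 1 x * (D.indicator 1 x + visitsBeforeExit G D n ω) ∂P x
          = ∫⁻ ω, visitsBeforeExit G D n ω ∂P x + D.indicator 1 x := by
            simp [hx, add_comm]
        _ = ∫⁻ y, ∫⁻ ω, visitsBeforeExit G D n (prep y ω) ∂P y ∂F x + D.indicator 1 x := by
            rw [hP.lintegral_eq x (measurable_visitsBeforeExit hG hD n)]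
        _ ≤ ∫⁻ y, f y ∂F x + D.indicator 1 x := by
            gcongr with y
            exact ih y
        _ ≤ f x := hf x hx
    · simp [hx]

theorem ae_iSup_visitsBeforeExit_lt_top [IsMarkovKernel P] (hP : IsTraceKernel F P)
    {G D : Set S} (hG : MeasurableSet G) (hD : MeasurableSet D) {f : S → ℝ≥0∞}
    (hf : ∀ x ∈ G, ∫⁻ y, f y ∂F x + D.indicator 1 x ≤ f x) {x : S} (hx : f x ≠ ⊤) :
    ∀ᵐ ω ∂P x, ⨆ n, visitsBeforeExit G D n (prep x ω) < ⊤ := by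
  have hmeas (n : ℕ) : Measurable fun ω => visitsBeforeExit G D n (prep x ω) :=
    (measurable_visitsBeforeExit hG hD n).comp (measurable_prep x)
  have hmono : Monotone fun n ω => visitsBeforeExit G D n (prep x ω) :=
    fun m n hmn ω => monotone_visitsBeforeExit G D hmn (prep x ω)
  refine ae_lt_top (.iSup hmeas) (ne_top_of_le_ne_top hx ?_)
  rw [lintegral_iSup hmeas hmono]
  exact iSup_le fun n => hP.lintegral_visitsBeforeExit_le hG hD hf n x

theorem ae_eventually_notMem [IsMarkovKernel P] (hP : IsTraceKernel F P)
    {G D : Set S} (hG : MeasurableSet G) (hD : MeasurableSet D) {f : S → ℝ≥0∞}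
    (hf_top : ∀ x, f x ≠ ⊤) (hf : ∀ x ∈ G, ∫⁻ y, f y ∂F x + D.indicator 1 x ≤ f x) (x : S) :
    ∀ᵐ ω ∂P x, (∀ᶠ n in atTop, ω n ∈ G) → ∀ᶠ n in atTop, ω n ∉ D := by
  have hmeas : MeasurableSet {ω | ⨆ n, visitsBeforeExit G D n ω < ⊤} :=
    measurableSet_lt (.iSup (measurable_visitsBeforeExit hG hD)) measurable_const
  filter_upwards [hP.ae_forall_shift_mem hmeas
    (fun s => hP.ae_iSup_visitsBeforeExit_lt_top hG hD hf (hf_top s)) x] with ω hω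
  exact eventually_notMem_of_iSup_visitsBeforeExit_lt_top hω

theorem ae_eventually_notMem_of_lex [IsMarkovKernel P] (hP : IsTraceKernel F P)
    {ι : Type*} [Preorder ι] [Finite ι] {C : Set S} (hC : MeasurableSet C)
    {D : ι → Set S} (hD : ∀ l, MeasurableSet (D l)) {f : ι → S → ℝ≥0∞}
    (hf_top : ∀ l x, f l x ≠ ⊤)
    (hf : ∀ l, ∀ x ∈ C, (∀ i < l, x ∉ D i) → ∫⁻ y, f l y ∂F x + (D l).indicator 1 x ≤ f l x)
    (x : S) :
    ∀ᵐ ω ∂P x, (∀ᶠ n in atTop, ω n ∈ C) → ∀ᶠ n in atTop, ∀ l, ω n ∉ D l := by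
  have hG (l : ι) : MeasurableSet (C ∩ ⋂ i ∈ Iio l, (D i)ᶜ) :=
    hC.inter (.biInter (to_countable _) fun i _ => (hD i).compl)
  have hlevel : ∀ᵐ ω ∂P x, ∀ l,
      (∀ᶠ n in atTop, ω n ∈ C ∩ ⋂ i ∈ Iio l, (D i)ᶜ) → ∀ᶠ n in atTop, ω n ∉ D l :=
    ae_all_iff.2 fun l => hP.ae_eventually_notMem (hG l) (hD l) (hf_top l)
      (fun y hy => hf l y hy.1 (mem_iInter₂.1 hy.2)) x
  filter_upwards [hlevel] with ω hω hωC
  refine eventually_all.2 fun l => ?_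
  induction l using WellFoundedLT.induction with
  | ind l ih =>
    have hbelow : ∀ᶠ n in atTop, ∀ i ∈ Iio l, ω n ∉ D i :=
      (eventually_all_finite (toFinite _)).2 ih
    refine hω l ?_
    filter_upwards [hωC, hbelow] with n hnC hn
    exact ⟨hnC, mem_iInter₂.2 hn⟩

end IsTraceKernel

/-- The states at which the next-time expectation of `r` drops by at least `1` in component `l` and
does not increase in the components before `l`; thus `l` witnesses `r x ≻ (𝕏 r) x`. -/
def strictDecreaseSet (F : Kernel S S) {d : ℕ} (r : S → Fin d → ℝ≥0∞) (l : Fin d) : Set S :=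
  {x | (∀ i < l, nextTimeV F r x i ≤ r x i) ∧ nextTimeV F r x l + 1 ≤ r x l}

theorem measurableSet_strictDecreaseSet (F : Kernel S S) {d : ℕ} {r : S → Fin d → ℝ≥0∞}
    (hr : ∀ i, Measurable fun x => r x i) (l : Fin d) :
    MeasurableSet (strictDecreaseSet F r l) := by
  have hnext (i : Fin d) : Measurable fun x => nextTimeV F r x i := (hr i).lintegral_kernel
  have hle (i : Fin d) : MeasurableSet {x | nextTimeV F r x i ≤ r x i} :=
    measurableSet_le (hnext i) (hr i)
  have hset : strictDecreaseSet F r l = (⋂ i ∈ Iio l, {x | nextTimeV F r x i ≤ r x i}) ∩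
      {x | nextTimeV F r x l + 1 ≤ r x l} := by
    ext x
    simp [strictDecreaseSet]
  rw [hset]
  exact (MeasurableSet.biInter (to_countable _) fun i _ => hle i).inter
    (measurableSet_le ((hnext l).add_const 1) (hr l))

theorem nextTimeV_add_indicator_le_of_lexGETrunc {F : Kernel S S} {d k : ℕ}
    {r : S → Fin d → ℝ≥0∞} {x : S} (hx : lexGETrunc k (r x) (nextTimeV F r x))
    {l : Fin d} (hl : (l : ℕ) < k) (hbelow : ∀ i < l, x ∉ strictDecreaseSet F r i) :
    nextTimeV F r x l + (strictDecreaseSet F r l).indicator 1 x ≤ r x l := by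
  by_cases hxl : x ∈ strictDecreaseSet F r l
  · rw [indicator_of_mem hxl]
    exact hxl.2
  rw [indicator_of_notMem hxl, add_zero]
  rcases hx with ⟨j, -, hj⟩ | hle
  · rcases lt_trichotomy j l with hjl | rfl | hlj
    · exact absurd hj (hbelow j hjl)
    · exact absurd hj hxl
    · exact hj.1 l hlj
  · exact hle l hl

namespace IsPMSM

variable {F : Kernel S S} {P : Kernel S (ℕ → S)} {d : ℕ} {p : S → ℕ} {r : S → Fin d → ℝ≥0∞}

theorem lexGETrunc_nextTimeV (hr : IsPMSM F p r) (x : S) :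
    lexGETrunc (p x) (r x) (nextTimeV F r x) := by
  by_cases hx : Even (p x)
  · exact hr.2.2.1 x hx
  · exact .inl (hr.2.2.2 x hx)

theorem ae_eventually_notMem_strictDecreaseSet [IsMarkovKernel P] (hr : IsPMSM F p r)
    (hp : Measurable p) (hP : IsTraceKernel F P) (q : ℕ) (x : S) :
    ∀ᵐ ω ∂P x, (∀ᶠ n in atTop, q ≤ p (ω n)) →
      ∀ᶠ n in atTop, ∀ l : Fin d, (l : ℕ) < q → ω n ∉ strictDecreaseSet F r l := by
  have hlex := hP.ae_eventually_notMem_of_lex (ι := {l : Fin d // (l : ℕ) < q})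
    (C := {y | q ≤ p y}) (D := fun l => strictDecreaseSet F r l) (f := fun l y => r y l)
    (measurableSet_le measurable_const hp)
    (fun l => measurableSet_strictDecreaseSet F hr.1 l) (fun l y => hr.2.1 y l)
    (fun l y hy hbelow => nextTimeV_add_indicator_le_of_lexGETrunc (hr.lexGETrunc_nextTimeV y)
      (l.2.trans_le hy) fun i hi => hbelow ⟨i, lt_trans (Fin.lt_def.1 hi) l.2⟩ hi) x
  simpa only [Subtype.forall, mem_ofPred_eq] using hlex

theorem ae_eventually_ne_of_not_even [IsMarkovKernel P] (hr : IsPMSM F p r)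
    (hp : Measurable p) (hP : IsTraceKernel F P) {q : ℕ} (hq : ¬ Even q) (x : S) :
    ∀ᵐ ω ∂P x, (∀ᶠ n in atTop, q ≤ p (ω n)) → ∀ᶠ n in atTop, p (ω n) ≠ q := by
  filter_upwards [hr.ae_eventually_notMem_strictDecreaseSet hp hP q x] with ω hω hge
  filter_upwards [hω hge] with n hn
  rintro rfl
  obtain ⟨l, hl, hdec⟩ := hr.2.2.2 (ω n) hq
  exact hn l hl hdec

end IsPMSM

/-- If a progress-measure supermartingale exists for `(F, p)`, then the parity
condition for `p` holds almost surely from every initial state. -/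
theorem PMSM_implies_parity_as
    (F : Kernel S S) [IsMarkovKernel F]
    (P : Kernel S (ℕ → S)) [IsMarkovKernel P]
    (hP : ∀ s₀ : S, (P s₀ : Measure (ℕ → S)) = (F s₀).bind fun s₁ => (P s₁).map (prep s₁))
    (d : ℕ) (p : S → ℕ) (hpm : Measurable p) (hp : ∀ x, 1 ≤ p x ∧ p x ≤ d)
    (hPMSM : ∃ r : S → Fin d → ℝ≥0∞, IsPMSM F p r) :
    ∀ x₀ : S, P x₀ (parityEvent p) = 1 := by
  obtain ⟨r, hr⟩ := hPMSM
  intro x₀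
  have hodd : ∀ᵐ ω ∂P x₀, ∀ q, ¬ Even q →
      (∀ᶠ n in atTop, q ≤ p (ω n)) → ∀ᶠ n in atTop, p (ω n) ≠ q :=
    ae_all_iff.2 fun q => ae_all_iff.2 fun hq => hr.ae_eventually_ne_of_not_even hpm hP hq x₀
  have hparity : ∀ᵐ ω ∂P x₀, ω ∈ parityEvent p := by
    filter_upwards [hodd] with ω hω
    have hbdd : BddAbove (range fun n => p (ω n)) := ⟨d, forall_mem_range.2 fun n => (hp _).2⟩
    by_contra hnot
    exact frequently_eq_sInf_infinite_fiber hbdd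
      (hω _ hnot (eventually_sInf_infinite_fiber_le fun n => p (ω n)))
  exact (measure_congr (eventuallyEq_univ.2 hparity)).trans measure_univ
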